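/- arXiv:1704.04671 — 2 statements merged into one kernel-verified Lean document; each statement's English description precedes it below -/
import Mathlib

section
/- Fix K ≥ 1. Define multisets recursively by rmax_1 = {f^s(1)}, kmax_1 = ∅, and for 1 ≤ i < n: rmax_{i+1} = topK(K, {f^s(i+1)} + map (x ↦ x + f^m(i+1)) rmax_i) and kmax_{i+1} = topK(K, kmax_i + map (x ↦ x + f^e(i+1)) rmax_i). Then for every 1 ≤ i ≤ n, rmax_i = topK(K, {R(j,i) : 1 ≤ j ≤ i}) and kmax_i = topK(K, {F(s,e) : 1 ≤ s < e ≤ i}). In particular, the Structured Maximal Sums recurrence outputs kmax_n, the multiset of the K largest structured window scores over the entire video. (Correctness part of Theorem 1 of the paper.) -/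
/-- `topK K S` is the multiset of the `min(K, |S|)` largest elements of `S`:
sort `S` in ascending order and keep the last `min(K, |S|)` elements. -/
noncomputable def topK (K : ℕ) (S : Multiset ℝ) : Multiset ℝ :=
  ((S.sort (· ≤ ·)).drop (Multiset.card S - K) : List ℝ)

/-- Incomplete-window score: `R fs fm j i = f^s(j) + ∑_{q=j+1}^{i} f^m(q)`. -/
def R (fs fm : ℕ → ℝ) (j i : ℕ) : ℝ :=
  fs j + ∑ q ∈ Finset.Icc (j + 1) i, fm q

/-- Structured score of the temporal window `(s, e)`:
`F(s,e) = f^s(s) + ∑_{t=s+1}^{e-1} f^m(t) + f^e(e)`. -/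
def Fscore (fs fm fe : ℕ → ℝ) (s e : ℕ) : ℝ :=
  fs s + ∑ t ∈ Finset.Icc (s + 1) (e - 1), fm t + fe e

/-- `Inc fs fm i` is the multiset `{R(j,i) : 1 ≤ j ≤ i}` of scores of the
incomplete windows ending at frame `i`. -/
def Inc (fs fm : ℕ → ℝ) (i : ℕ) : Multiset ℝ :=
  (Finset.Icc 1 i).val.map (fun j => R fs fm j i)

/-- `Win fs fm fe i` is the multiset `{F(s,e) : 1 ≤ s < e ≤ i}` of structured
scores of all temporal windows ending at or before frame `i`. -/
def Win (fs fm fe : ℕ → ℝ) (i : ℕ) : Multiset ℝ :=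
  (((Finset.Icc 1 i) ×ˢ (Finset.Icc 1 i)).filter (fun p => p.1 < p.2)).val.map
    (fun p => Fscore fs fm fe p.1 p.2)

/-!
Truncating to the `K` largest elements commutes with monotone maps, and truncating a summand first
does not change the `K` largest elements of a multiset sum: an element discarded from the summand is
dominated by `K` elements which are all still present. The untruncated multisets `Inc` and `Win`
satisfy the recurrence without any truncation, so the truncations in the recurrence can be pulled
out one step at a time.
-/

/-- `T` consists of the `min(K, |S|)` largest elements of `S`, counted with multiplicity. This
specification characterises `topK K S` independently of sorting, and makes sense in any linear
order; the complement of `T` in `S` is the multiset difference `S - T`. -/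
structure IsTopK {α : Type*} [LinearOrder α] (K : ℕ) (S T : Multiset α) : Prop where
  le : T ≤ S
  card_eq : Multiset.card T = min K (Multiset.card S)
  le_of_mem_sub : ∀ c ∈ S - T, ∀ t ∈ T, c ≤ t

section IsTopK

variable {α β : Type*} [LinearOrder α] [LinearOrder β] {K : ℕ}

theorem isTopK_add_left_iff {T C : Multiset α} :
    IsTopK K (T + C) T ↔
      Multiset.card T = min K (Multiset.card (T + C)) ∧ ∀ c ∈ C, ∀ t ∈ T, c ≤ t := by
  constructor
  · intro h
    exact ⟨h.card_eq, by simpa only [add_tsub_cancel_left] using h.le_of_mem_sub⟩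
  · rintro ⟨hcard, hle⟩
    exact ⟨Multiset.le_add_right T C, hcard, by simpa only [add_tsub_cancel_left] using hle⟩

theorem isTopK_self_of_card_le {S : Multiset α} (h : Multiset.card S ≤ K) : IsTopK K S S where
  le := le_rfl
  card_eq := (min_eq_right h).symm
  le_of_mem_sub := by simp

theorem isTopK_drop_sort (K : ℕ) (S : Multiset α) :
    IsTopK K S ((S.sort (· ≤ ·)).drop (Multiset.card S - K) : List α) := by
  set l := S.sort (· ≤ ·) with hl
  set m := Multiset.card S - K
  have hsplit : S = (l.drop m : Multiset α) + (l.take m : Multiset α) := by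
    rw [add_comm, Multiset.coe_add, List.take_append_drop, hl, Multiset.sort_eq]
  have hsorted : (l.take m ++ l.drop m).Pairwise (· ≤ ·) := by
    rw [List.take_append_drop]
    exact Multiset.pairwise_sort S (· ≤ ·)
  have hcard : (l.drop m).length = min K (Multiset.card S) := by
    rw [List.length_drop, hl, Multiset.length_sort]
    omega
  rw [hsplit, isTopK_add_left_iff, ← hsplit]
  exact ⟨hcard, (List.pairwise_append.1 hsorted).2.2⟩

namespace IsTopK

variable {S T : Multiset α}

theorem sort_eq_append (h : IsTopK K S T) :
    S.sort (· ≤ ·) = (S - T).sort (· ≤ ·) ++ T.sort (· ≤ ·) := by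
  refine List.Perm.eq_of_pairwise (fun a b _ _ => le_antisymm)
    (Multiset.pairwise_sort S (· ≤ ·)) ?_ ?_
  · refine List.pairwise_append.2
      ⟨Multiset.pairwise_sort _ _, Multiset.pairwise_sort _ _, fun c hc t ht => ?_⟩
    exact h.le_of_mem_sub c ((Multiset.mem_sort _).1 hc) t ((Multiset.mem_sort _).1 ht)
  · rw [← Multiset.coe_eq_coe, ← Multiset.coe_add, Multiset.sort_eq, Multiset.sort_eq,
      Multiset.sort_eq, tsub_add_cancel_of_le h.le]

theorem drop_sort_eq (h : IsTopK K S T) :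
    ((S.sort (· ≤ ·)).drop (Multiset.card S - K) : List α) = T := by
  have hlen : Multiset.card S - K = ((S - T).sort (· ≤ ·)).length := by
    rw [Multiset.length_sort, Multiset.card_sub h.le, h.card_eq]
    omega
  rw [h.sort_eq_append, hlen, List.drop_left, Multiset.sort_eq]

theorem map (h : IsTopK K S T) {f : α → β} (hf : Monotone f) :
    IsTopK K (S.map f) (T.map f) := by
  obtain ⟨C, rfl⟩ := Multiset.le_iff_exists_add.1 h.le
  obtain ⟨hcard, hle⟩ := isTopK_add_left_iff.1 h
  rw [Multiset.map_add, isTopK_add_left_iff, ← Multiset.map_add]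
  refine ⟨by simpa only [Multiset.card_map] using hcard, fun c' hc' t' ht' => ?_⟩
  obtain ⟨c, hc, rfl⟩ := Multiset.mem_map.1 hc'
  obtain ⟨t, ht, rfl⟩ := Multiset.mem_map.1 ht'
  exact hf (hle c hc t ht)

theorem le_of_le_countP (h : IsTopK K S T) {c : α} (hc : K ≤ S.countP (c ≤ ·)) :
    ∀ t ∈ T, c ≤ t := by
  by_contra! hlt
  obtain ⟨t, ht, htc⟩ := hlt
  have hcompl : (S - T).countP (c ≤ ·) = 0 :=
    Multiset.countP_eq_zero.2 fun d hd => ((h.le_of_mem_sub d hd t ht).trans_lt htc).not_ge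
  have hcount : T.countP (c ≤ ·) = Multiset.card T := by
    refine (Multiset.countP_le_card _ T).antisymm ?_
    calc Multiset.card T ≤ K := h.card_eq.trans_le (min_le_left _ _)
      _ ≤ S.countP (c ≤ ·) := hc
      _ = (T + (S - T)).countP (c ≤ ·) := by rw [add_tsub_cancel_of_le h.le]
      _ = T.countP (c ≤ ·) := by rw [Multiset.countP_add, hcompl, add_zero]
  exact htc.not_ge (Multiset.countP_eq_card.1 hcount t ht)

theorem trans_add_right (h : IsTopK K S T) {B U : Multiset α} (hU : IsTopK K (T + B) U) :
    IsTopK K (S + B) U := by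
  obtain ⟨C, rfl⟩ := Multiset.le_iff_exists_add.1 h.le
  obtain ⟨hcardT, hCT⟩ := isTopK_add_left_iff.1 h
  obtain ⟨D, hD⟩ := Multiset.le_iff_exists_add.1 hU.le
  have hDU := (isTopK_add_left_iff.1 (hD ▸ hU)).2
  have hcardU := hU.card_eq
  have hCU : ∀ c ∈ C, ∀ u ∈ U, c ≤ u := by
    intro c hc
    have hCpos : 0 < Multiset.card C := Multiset.card_pos_iff_exists_mem.2 ⟨c, hc⟩
    refine hU.le_of_le_countP ?_
    calc K = Multiset.card T := by rw [Multiset.card_add] at hcardT; omega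
      _ = T.countP (c ≤ ·) := (Multiset.countP_eq_card.2 (hCT c hc)).symm
      _ ≤ (T + B).countP (c ≤ ·) := Multiset.countP_le_of_le _ (Multiset.le_add_right T B)
  have hsplit : T + C + B = U + (D + C) := by rw [add_right_comm, hD, add_assoc]
  rw [hsplit, isTopK_add_left_iff, ← hsplit]
  constructor
  · simp only [Multiset.card_add] at hcardT hcardU ⊢
    omega
  · intro c hc
    exact (Multiset.mem_add.1 hc).elim (hDU c) (hCU c)

end IsTopK

end IsTopK

section topK

theorem topK_eq_iff {K : ℕ} {S T : Multiset ℝ} : topK K S = T ↔ IsTopK K S T :=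
  ⟨fun h => h ▸ isTopK_drop_sort K S, IsTopK.drop_sort_eq⟩

theorem topK_eq_self {K : ℕ} {S : Multiset ℝ} (h : Multiset.card S ≤ K) : topK K S = S :=
  topK_eq_iff.2 (isTopK_self_of_card_le h)

variable (K : ℕ)

theorem isTopK_topK (S : Multiset ℝ) : IsTopK K S (topK K S) :=
  topK_eq_iff.1 rfl

theorem map_topK {f : ℝ → ℝ} (hf : Monotone f) (S : Multiset ℝ) :
    (topK K S).map f = topK K (S.map f) :=
  (topK_eq_iff.2 ((isTopK_topK K S).map hf)).symm

theorem topK_topK_add (A B : Multiset ℝ) : topK K (topK K A + B) = topK K (A + B) :=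
  (topK_eq_iff.2 ((isTopK_topK K A).trans_add_right (isTopK_topK K (topK K A + B)))).symm

theorem topK_add_topK (A B : Multiset ℝ) : topK K (A + topK K B) = topK K (A + B) := by
  rw [add_comm, topK_topK_add, add_comm]

theorem topK_cons_topK (a : ℝ) (S : Multiset ℝ) :
    topK K (a ::ₘ topK K S) = topK K (a ::ₘ S) := by
  simpa only [Multiset.singleton_add] using topK_add_topK K {a} S

end topK

section Windows

variable (fs fm fe : ℕ → ℝ)

theorem R_self (i : ℕ) : R fs fm i i = fs i := by
  simp [R]

theorem R_add_one {j i : ℕ} (h : j ≤ i) : R fs fm j (i + 1) = R fs fm j i + fm (i + 1) := by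
  rw [R, R, Finset.sum_Icc_succ_top (by omega), add_assoc]

theorem Fscore_add_one (j i : ℕ) : Fscore fs fm fe j (i + 1) = R fs fm j i + fe (i + 1) := by
  rw [Fscore, R, Nat.add_sub_cancel]

theorem Inc_one : Inc fs fm 1 = {fs 1} := by
  simp [Inc, R_self]

theorem Inc_add_one (i : ℕ) :
    Inc fs fm (i + 1) = fs (i + 1) ::ₘ (Inc fs fm i).map (fun x => x + fm (i + 1)) := by
  have hIcc : (Finset.Icc 1 (i + 1)).val = (i + 1) ::ₘ (Finset.Icc 1 i).val := by
    rw [← Finset.insert_Icc_right_eq_Icc_add_one (by omega),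
      Finset.insert_val_of_notMem (by simp)]
  rw [Inc, Inc, hIcc, Multiset.map_cons, R_self, Multiset.map_map]
  congr 1
  exact Multiset.map_congr rfl fun j hj => R_add_one fs fm (Finset.mem_Icc.1 hj).2

theorem Win_one : Win fs fm fe 1 = 0 := by
  simp [Win]

theorem filter_lt_Icc_product_Icc_add_one (a i : ℕ) :
    (Finset.Icc a (i + 1) ×ˢ Finset.Icc a (i + 1)).filter (fun p => p.1 < p.2) =
      (Finset.Icc a i ×ˢ Finset.Icc a i).filter (fun p => p.1 < p.2) ∪
        Finset.Icc a i ×ˢ {i + 1} := by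
  ext ⟨s, e⟩
  simp only [Finset.mem_filter, Finset.mem_product, Finset.mem_Icc, Finset.mem_union,
    Finset.mem_singleton]
  omega

theorem Win_add_one (i : ℕ) :
    Win fs fm fe (i + 1) = Win fs fm fe i + (Inc fs fm i).map (fun x => x + fe (i + 1)) := by
  have hdisj : Disjoint ((Finset.Icc 1 i ×ˢ Finset.Icc 1 i).filter (fun p => p.1 < p.2))
      (Finset.Icc 1 i ×ˢ {i + 1}) := by
    rw [Finset.disjoint_left]
    rintro ⟨s, e⟩ hOld hNew
    simp only [Finset.mem_filter, Finset.mem_product, Finset.mem_Icc, Finset.mem_singleton]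
      at hOld hNew
    omega
  rw [Win, Win, Inc, filter_lt_Icc_product_Icc_add_one, ← Finset.disjUnion_eq_union _ _ hdisj,
    Finset.disjUnion_val, Multiset.map_add, Finset.product_singleton, Finset.map_val,
    Multiset.map_map, Multiset.map_map]
  simp only [Function.comp_def, Function.Embedding.coeFn_mk, Fscore_add_one]

end Windows

/-- Correctness of the Structured Maximal Sums recurrence (Theorem 1):
if `rmax` and `kmax` satisfy the SMS recurrence, then for every `1 ≤ i ≤ n`,
`rmax i` is the multiset of the K largest incomplete-window scores ending at
frame `i` and `kmax i` is the multiset of the K largest structured window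
scores of windows ending at or before frame `i`; in particular `kmax n` is
the multiset of the K largest structured window scores of the whole video. -/
theorem sms_correct (n K : ℕ) (hK : 1 ≤ K) (fs fm fe : ℕ → ℝ)
    (rmax kmax : ℕ → Multiset ℝ)
    (hr1 : rmax 1 = {fs 1}) (hk1 : kmax 1 = 0)
    (hstep : ∀ i, 1 ≤ i → i < n →
      rmax (i + 1) =
        topK K (fs (i + 1) ::ₘ (rmax i).map (fun x => x + fm (i + 1))) ∧
      kmax (i + 1) =
        topK K (kmax i + (rmax i).map (fun x => x + fe (i + 1)))) :
    ∀ i, 1 ≤ i → i ≤ n →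
      rmax i = topK K (Inc fs fm i) ∧ kmax i = topK K (Win fs fm fe i) := by
  have mono_add (a : ℝ) : Monotone (fun x => x + a) := monotone_id.add_const a
  intro i hi
  induction i, hi using Nat.le_induction with
  | base =>
    intro _
    rw [hr1, hk1, Inc_one, Win_one]
    exact ⟨(topK_eq_self hK).symm, (topK_eq_self K.zero_le).symm⟩
  | succ i hi ih =>
    intro hin
    obtain ⟨ihr, ihk⟩ := ih (by omega)
    obtain ⟨hr, hk⟩ := hstep i hi hin
    constructor
    · rw [hr, ihr, map_topK K (mono_add _), topK_cons_topK, Inc_add_one]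
    · rw [hk, ihk, ihr, map_topK K (mono_add _), topK_topK_add, topK_add_topK, Win_add_one]
end

section
/- Let y_gt ⊆ {1,…,n} be the set of frames of a fixed ground-truth window, and let f̃^p (p ∈ {s,m,e}) and F̃ be the modified scores and modified structured score defined by f̃^p(t) = f^p(t) + 1 if t ∉ y_gt and f̃^p(t) = f^p(t) − 1 if t ∈ y_gt. Then, provided n ≥ 2, max over temporal windows y = (s,e) of (Δ(y_gt, y) + F(s,e)) = |y_gt| + max over temporal windows (s,e) of F̃(s,e), and a window (s,e) maximizes Δ(y_gt, ·) + F(·) if and only if it maximizes F̃(·). Hence loss-augmented inference reduces to a structured maximal sum computation on the modified scores. -/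
/-- Overlap penalty between two windows viewed as sets of frames:
`Δ(y, ȳ) = |y ∪ ȳ| − |y ∩ ȳ|`. -/
def delta (y ybar : Finset ℕ) : ℝ :=
  ((y ∪ ybar).card : ℝ) - ((y ∩ ybar).card : ℝ)

/-- Modified framewise score: `f̃(t) = f(t) − 1` if `t` is in the ground-truth
window and `f̃(t) = f(t) + 1` otherwise. -/
def modifyScore (ygt : Finset ℕ) (f : ℕ → ℝ) : ℕ → ℝ :=
  fun t => if t ∈ ygt then f t - 1 else f t + 1

/-!
The loss `Δ(y_gt, y)` is modular in `y`: starting from `Δ(y_gt, ∅) = |y_gt|`, each frame of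
`y` contributes `-1` if it lies in `y_gt` and `+1` otherwise. A window uses each of its frames
in exactly one of the roles start, middle, end, so adding these contributions to all three
score functions adds `Δ(y_gt, y) - |y_gt|` to the structured score. The two objectives
therefore differ by a constant.
-/

/-- The marginal loss of frame `t`: the amount by which adding `t` to a set of frames that does not
contain it changes the loss `Δ(y_gt, ·)`. -/
def marginalLoss (ygt : Finset ℕ) (t : ℕ) : ℝ :=
  if t ∈ ygt then -1 else 1

lemma modifyScore_eq_add_marginalLoss (ygt : Finset ℕ) (f : ℕ → ℝ) :
    modifyScore ygt f = f + marginalLoss ygt := by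
  funext t
  simp only [modifyScore, marginalLoss, Pi.add_apply]
  split_ifs <;> ring

lemma sum_marginalLoss (ygt y : Finset ℕ) :
    ∑ t ∈ y, marginalLoss ygt t = ((y \ ygt).card : ℝ) - ((ygt ∩ y).card : ℝ) := by
  simp only [marginalLoss, Finset.sum_ite, Finset.filter_mem_eq_inter,
    Finset.filter_notMem_eq_sdiff, Finset.sum_const, nsmul_eq_mul, Finset.inter_comm y ygt]
  ring

lemma delta_eq_card_add_sum_marginalLoss (ygt y : Finset ℕ) :
    delta ygt y = (ygt.card : ℝ) + ∑ t ∈ y, marginalLoss ygt t := by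
  have card_union : ((ygt ∪ y).card : ℝ) = (y \ ygt).card + ygt.card := by
    rw [Finset.union_comm]
    exact_mod_cast (Finset.card_sdiff_add_card y ygt).symm
  rw [delta, card_union, sum_marginalLoss]
  ring

lemma Fscore_add (fs fm fe gs gm ge : ℕ → ℝ) (s e : ℕ) :
    Fscore (fs + gs) (fm + gm) (fe + ge) s e = Fscore fs fm fe s e + Fscore gs gm ge s e := by
  simp only [Fscore, Pi.add_apply, Finset.sum_add_distrib]
  ring

lemma Fscore_self_eq_sum_Icc (f : ℕ → ℝ) {s e : ℕ} (hse : s < e) :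
    Fscore f f f s e = ∑ t ∈ Finset.Icc s e, f t := by
  rw [Fscore, Finset.Icc_add_one_sub_one_eq_Ioo, Finset.add_sum_Ioo_eq_sum_Ico hse,
    Finset.sum_Ico_add_eq_sum_Icc hse.le]

lemma delta_add_Fscore_eq_card_add_Fscore_modifyScore (ygt : Finset ℕ) (fs fm fe : ℕ → ℝ)
    {s e : ℕ} (hse : s < e) :
    delta ygt (Finset.Icc s e) + Fscore fs fm fe s e =
      (ygt.card : ℝ) +
        Fscore (modifyScore ygt fs) (modifyScore ygt fm) (modifyScore ygt fe) s e := by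
  simp only [modifyScore_eq_add_marginalLoss]
  rw [Fscore_add, Fscore_self_eq_sum_Icc _ hse, delta_eq_card_add_sum_marginalLoss]
  ring

theorem loss_augmented_inference_general (windows : Finset (ℕ × ℕ)) (hne : windows.Nonempty)
    (hlt : ∀ p ∈ windows, p.1 < p.2) (fs fm fe : ℕ → ℝ) (ygt : Finset ℕ) :
    windows.sup' hne (fun p => delta ygt (Finset.Icc p.1 p.2) + Fscore fs fm fe p.1 p.2) =
      (ygt.card : ℝ) +
        windows.sup' hne (fun p =>
          Fscore (modifyScore ygt fs) (modifyScore ygt fm) (modifyScore ygt fe) p.1 p.2) ∧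
    ∀ p ∈ windows,
      ((∀ q ∈ windows,
          delta ygt (Finset.Icc q.1 q.2) + Fscore fs fm fe q.1 q.2 ≤
            delta ygt (Finset.Icc p.1 p.2) + Fscore fs fm fe p.1 p.2) ↔
        (∀ q ∈ windows,
          Fscore (modifyScore ygt fs) (modifyScore ygt fm) (modifyScore ygt fe) q.1 q.2 ≤
            Fscore (modifyScore ygt fs) (modifyScore ygt fm) (modifyScore ygt fe) p.1 p.2)) := by
  have objective_eq (p : ℕ × ℕ) (hp : p ∈ windows) :=
    delta_add_Fscore_eq_card_add_Fscore_modifyScore ygt fs fm fe (hlt p hp)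
  constructor
  · rw [Finset.add_sup']
    exact Finset.sup'_congr hne rfl objective_eq
  · intro p hp
    refine forall₂_congr fun q hq => ?_
    rw [objective_eq p hp, objective_eq q hq, add_le_add_iff_left]

/-- Loss-augmented inference reduces to a structured maximal sum computation
on the modified scores: the maximum over windows of `Δ(y_gt, ·) + F(·)`
equals `|y_gt|` plus the maximum of the modified structured score `F̃`, and a
window maximizes `Δ(y_gt, ·) + F(·)` iff it maximizes `F̃`. -/
theorem loss_augmented_inference (n : ℕ) (hn : 2 ≤ n) (fs fm fe : ℕ → ℝ)
    (ygt : Finset ℕ) (hgt : ygt ⊆ Finset.Icc 1 n) :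
    (((Finset.Icc 1 n) ×ˢ (Finset.Icc 1 n)).filter (fun p => p.1 < p.2)).sup'
        (by
          refine ⟨(1, 2), ?_⟩
          simp only [Finset.mem_filter, Finset.mem_product, Finset.mem_Icc]
          omega)
        (fun p => delta ygt (Finset.Icc p.1 p.2) + Fscore fs fm fe p.1 p.2) =
      (ygt.card : ℝ) +
        (((Finset.Icc 1 n) ×ˢ (Finset.Icc 1 n)).filter (fun p => p.1 < p.2)).sup'
          (by
            refine ⟨(1, 2), ?_⟩
            simp only [Finset.mem_filter, Finset.mem_product, Finset.mem_Icc]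
            omega)
          (fun p =>
            Fscore (modifyScore ygt fs) (modifyScore ygt fm) (modifyScore ygt fe)
              p.1 p.2) ∧
    ∀ p ∈ ((Finset.Icc 1 n) ×ˢ (Finset.Icc 1 n)).filter (fun p => p.1 < p.2),
      ((∀ q ∈ ((Finset.Icc 1 n) ×ˢ (Finset.Icc 1 n)).filter (fun p => p.1 < p.2),
          delta ygt (Finset.Icc q.1 q.2) + Fscore fs fm fe q.1 q.2 ≤
            delta ygt (Finset.Icc p.1 p.2) + Fscore fs fm fe p.1 p.2) ↔
        (∀ q ∈ ((Finset.Icc 1 n) ×ˢ (Finset.Icc 1 n)).filter (fun p => p.1 < p.2),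
          Fscore (modifyScore ygt fs) (modifyScore ygt fm) (modifyScore ygt fe)
              q.1 q.2 ≤
            Fscore (modifyScore ygt fs) (modifyScore ygt fm) (modifyScore ygt fe)
              p.1 p.2)) :=
  loss_augmented_inference_general _ _ (fun _ hp => (Finset.mem_filter.mp hp).2) fs fm fe ygt
end
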